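/- Let φ ∈ C¹(ℝ⁺ × [0,T]) be a solution of the flow-map equation with admissible data (φ₀, g) such that φ₀ ≡ ε₀ is a positive constant, g' ≤ 0 on ℝ⁺, and inf_{(x,t) ∈ ℝ⁺×[0,T]} φ(x,t) > 0. Set ε(t) = φ(0,t). Then φ(x,t) ≥ ε(t) for all x ∈ ℝ⁺ and t ∈ [0,T]; in particular min_{x ∈ ℝ⁺} φ(x,t) = ε(t). -/

import Mathlib

/-!
Dividing the equation at `x` by the equation at `0` shows that `φ(x,t) / φ(0,t)` has logarithmic
time derivative `-∫_0^x g'/Φ`, which is nonnegative because `g' ≤ 0 < Φ`. The ratio equals `1` at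
`t = 0`, so it stays at least `1`.

Splitting the integral at `x` requires `g'/Φ` to be integrable down to `z = 0`, where `Φ` vanishes.
There `g'(0) = 0` and `g ∈ C²` give `|g'(z)| ≤ C z`, while `Φ(z,t) ≥ m z`, so the quotient is
bounded; away from `0` it is supported in a bounded set (`integrableOn_quotient`).
-/

open Set MeasureTheory Filter Topology

noncomputable def gD (g : ℝ → ℝ) (z : ℝ) : ℝ := derivWithin g (Set.Ici 0) z

noncomputable def Phi (φ : ℝ → ℝ → ℝ) (z t : ℝ) : ℝ := ∫ σ in (0:ℝ)..z, φ σ t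

/-- Admissible data for the flow-map equation: `φ₀ ∈ C¹(ℝ⁺)`, `g ∈ C²(ℝ⁺)` with
compact support in `ℝ⁺`, `inf φ₀ > 0` and `g'(0) = 0`. -/
def AdmissibleData (φ₀ g : ℝ → ℝ) : Prop :=
  ContDiffOn ℝ 1 φ₀ (Set.Ici 0) ∧
  ContDiffOn ℝ 2 g (Set.Ici 0) ∧
  (∃ a : ℝ, ∀ z ≥ a, g z = 0) ∧
  (∃ m : ℝ, 0 < m ∧ ∀ x ≥ (0:ℝ), m ≤ φ₀ x) ∧
  gD g 0 = 0

/-- `φ` is a `C¹(ℝ⁺ × I)` solution of the flow-map equation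
`∂ₜφ(x,t) = φ(x,t) ∫_x^∞ g'(z)/Φ(z,t) dz`, `φ(x,0) = φ₀(x)`. -/
def IsFlowMapSolution (φ₀ g : ℝ → ℝ) (φ : ℝ → ℝ → ℝ) (I : Set ℝ) : Prop :=
  ContDiffOn ℝ 1 (fun p : ℝ × ℝ => φ p.1 p.2) (Set.Ici 0 ×ˢ I) ∧
  (∀ x ≥ (0:ℝ), φ x 0 = φ₀ x) ∧
  (∀ x ≥ (0:ℝ), ∀ t ∈ I,
    HasDerivWithinAt (fun s => φ x s)
      (φ x t * ∫ z in Set.Ioi x, gD g z / Phi φ z t) I t)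

/-- `inf_{(x,t) ∈ ℝ⁺ × I} φ(x,t) > 0`. -/
def PosInfOn (φ : ℝ → ℝ → ℝ) (I : Set ℝ) : Prop :=
  ∃ m : ℝ, 0 < m ∧ ∀ x ≥ (0:ℝ), ∀ t ∈ I, m ≤ φ x t

lemma gD_contDiffOn {g : ℝ → ℝ} (hg : ContDiffOn ℝ 2 g (Set.Ici 0)) :
    ContDiffOn ℝ 1 (gD g) (Set.Ici 0) :=
  hg.derivWithin (uniqueDiffOn_Ici 0) (by norm_num [one_add_one_eq_two])

lemma gD_eq_zero {g : ℝ → ℝ} {a z : ℝ} (ha : ∀ z ≥ a, g z = 0) (hz : a < z) :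
    gD g z = 0 := by
  have h : g =ᶠ[𝓝[Set.Ici 0] z] fun _ => (0 : ℝ) := by
    apply mem_nhdsWithin_of_mem_nhds
    filter_upwards [Ioi_mem_nhds hz] with w hw using ha w (le_of_lt hw)
  rw [gD, h.derivWithin_eq (ha z hz.le)]
  simp

/-- The linear bound `|g'(z)| ≤ C z` near the origin, from `g'(0) = 0` and `g ∈ C²`. -/
lemma exists_gD_bound {g : ℝ → ℝ} (hg : ContDiffOn ℝ 2 g (Set.Ici 0)) (h0 : gD g 0 = 0) (b : ℝ) :
    ∃ C : ℝ, 0 ≤ C ∧ ∀ z ∈ Set.Icc 0 b, |gD g z| ≤ C * z := by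
  have h1 : ContDiffOn ℝ 1 (gD g) (Set.Icc 0 b) := (gD_contDiffOn hg).mono Icc_subset_Ici_self
  obtain ⟨K, hK⟩ := h1.exists_lipschitzOnWith one_ne_zero (convex_Icc 0 b) isCompact_Icc
  refine ⟨K, K.2, fun z hz => ?_⟩
  have := hK.dist_le_mul z hz 0 ⟨le_rfl, hz.1.trans hz.2⟩
  simpa [Real.dist_eq, h0, abs_of_nonneg hz.1] using this

lemma integrable_slice {f : ℝ → ℝ} (hf : ContinuousOn f (Set.Ici 0)) {z : ℝ} (hz : 0 ≤ z) :
    IntervalIntegrable f volume 0 z :=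
  (hf.mono (by rw [uIcc_of_le hz]; exact Icc_subset_Ici_self)).intervalIntegrable

lemma mul_le_Phi {φ : ℝ → ℝ → ℝ} {t m z : ℝ} (hf : ContinuousOn (fun x => φ x t) (Set.Ici 0))
    (hm : ∀ x ≥ (0:ℝ), m ≤ φ x t) (hz : 0 ≤ z) : m * z ≤ Phi φ z t := by
  have := intervalIntegral.integral_mono_on hz (intervalIntegrable_const (c := m))
    (integrable_slice hf hz) (fun x hx => hm x hx.1)
  simpa [Phi, mul_comm] using this

lemma Phi_continuousOn {φ : ℝ → ℝ → ℝ} {t : ℝ}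
    (hf : ContinuousOn (fun x => φ x t) (Set.Ici 0)) (b : ℝ) (hb : 0 ≤ b) :
    ContinuousOn (fun z => Phi φ z t) (Set.Icc 0 b) := by
  have h := intervalIntegral.continuousOn_primitive_interval (μ := volume) (a := 0) (b := b)
    (f := fun x => φ x t)
    (by
      rw [uIcc_of_le hb]
      exact (hf.mono Icc_subset_Ici_self).integrableOn_Icc)
  rwa [uIcc_of_le hb] at h

/-- The quotient `g'/Φ` is bounded near `0` and vanishes for large `z`; hence the integral in the
equation is a genuine one for every `x ≥ 0`, including `x = 0` where `Φ` vanishes. -/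
lemma integrableOn_quotient {g : ℝ → ℝ} {φ : ℝ → ℝ → ℝ} {t m a : ℝ}
    (hg : ContDiffOn ℝ 2 g (Set.Ici 0)) (h0 : gD g 0 = 0) (ha : ∀ z ≥ a, g z = 0)
    (hf : ContinuousOn (fun x => φ x t) (Set.Ici 0)) (hm0 : 0 < m)
    (hm : ∀ x ≥ (0:ℝ), m ≤ φ x t) :
    IntegrableOn (fun z => gD g z / Phi φ z t) (Set.Ioi 0) := by
  set b := max a 0
  have hb : 0 ≤ b := le_max_right _ _
  obtain ⟨C, hC, hCz⟩ := exists_gD_bound hg h0 b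
  have hsplit : Set.Ioi (0:ℝ) = Set.Ioc 0 b ∪ Set.Ioi b := (Ioc_union_Ioi_eq_Ioi hb).symm
  rw [hsplit]
  refine IntegrableOn.union ?_ ?_
  · have hcont : ContinuousOn (fun z => gD g z / Phi φ z t) (Set.Ioc 0 b) := by
      refine ContinuousOn.div ((gD_contDiffOn hg).continuousOn.mono fun z hz => hz.1.le)
        ((Phi_continuousOn hf b hb).mono Ioc_subset_Icc_self) fun z hz => ?_
      exact ((mul_pos hm0 hz.1).trans_le (mul_le_Phi hf hm hz.1.le)).ne'
    refine IntegrableOn.of_bound (by simp)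
      (hcont.aestronglyMeasurable measurableSet_Ioc) (C / m) ?_
    refine (ae_restrict_iff' measurableSet_Ioc).2 (Eventually.of_forall fun z hz => ?_)
    have hP := mul_le_Phi hf hm hz.1.le
    have hmz := mul_pos hm0 hz.1
    rw [Real.norm_eq_abs, abs_div, abs_of_pos (hmz.trans_le hP),
      div_le_div_iff₀ (hmz.trans_le hP) hm0]
    calc |gD g z| * m ≤ (C * z) * m := by gcongr; exact hCz z ⟨hz.1.le, hz.2⟩
      _ = C * (m * z) := by ring
      _ ≤ C * Phi φ z t := by gcongr
  · refine (integrableOn_zero).congr_fun (fun z hz => ?_) measurableSet_Ioi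
    simp [gD_eq_zero ha ((le_max_left a 0).trans_lt hz)]

lemma integral_le {g : ℝ → ℝ} {φ : ℝ → ℝ → ℝ} {t m a x : ℝ}
    (hg : ContDiffOn ℝ 2 g (Set.Ici 0)) (h0 : gD g 0 = 0) (ha : ∀ z ≥ a, g z = 0)
    (hg' : ∀ z ≥ (0:ℝ), gD g z ≤ 0)
    (hf : ContinuousOn (fun x => φ x t) (Set.Ici 0)) (hm0 : 0 < m)
    (hm : ∀ x ≥ (0:ℝ), m ≤ φ x t) (hx : 0 ≤ x) :
    ∫ z in Set.Ioi 0, gD g z / Phi φ z t ≤ ∫ z in Set.Ioi x, gD g z / Phi φ z t := by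
  have hint := integrableOn_quotient hg h0 ha hf hm0 hm
  have hneg : ∀ z ∈ Set.Ioi (0:ℝ), 0 ≤ -(gD g z / Phi φ z t) := fun z hz =>
    neg_nonneg.2 (div_nonpos_of_nonpos_of_nonneg (hg' z (le_of_lt hz))
      ((mul_pos hm0 hz).le.trans (mul_le_Phi hf hm (le_of_lt hz))))
  have := setIntegral_mono_set (μ := volume) hint.neg
    ((ae_restrict_iff' measurableSet_Ioi).2 (Eventually.of_forall hneg))
    (show Set.Ioi x ≤ᵐ[volume] Set.Ioi 0 from (Ioi_subset_Ioi hx).eventuallyLE)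
  simp only [Pi.neg_apply, integral_neg] at this
  linarith

/-- from Lemma `lemma_cont`: for a solution `φ` with constant data
`φ₀ ≡ ε₀ > 0`, `g' ≤ 0` and positive infimum, one has `φ(x,t) ≥ ε(t) = φ(0,t)` for all
`x ∈ ℝ⁺`; in particular `min_{x ∈ ℝ⁺} φ(x,t) = ε(t)`. -/
theorem statement6 (ε₀ T : ℝ) (g : ℝ → ℝ) (φ : ℝ → ℝ → ℝ)
    (hε₀ : 0 < ε₀) (hT : 0 < T)
    (hadm : AdmissibleData (fun _ => ε₀) g)
    (hg' : ∀ z ≥ (0:ℝ), gD g z ≤ 0)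
    (hsol : IsFlowMapSolution (fun _ => ε₀) g φ (Set.Icc 0 T))
    (hinf : PosInfOn φ (Set.Icc 0 T)) :
    ∀ t ∈ Set.Icc (0:ℝ) T,
      (∀ x ≥ (0:ℝ), φ 0 t ≤ φ x t) ∧
      IsLeast ((fun x => φ x t) '' Set.Ici 0) (φ 0 t) := by
  obtain ⟨-, hg, ⟨a, ha⟩, -, h0⟩ := hadm
  obtain ⟨hC1, hinit, hode⟩ := hsol
  obtain ⟨m, hm0, hm⟩ := hinf
  have main : ∀ t ∈ Set.Icc (0:ℝ) T, ∀ x ≥ (0:ℝ), φ 0 t ≤ φ x t := by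
    intro t ht x hx
    have hpos : ∀ y ≥ (0:ℝ), ∀ s ∈ Set.Icc 0 T, 0 < φ y s := fun y hy s hs =>
      hm0.trans_le (hm y hy s hs)
    have hder : ∀ s ∈ Set.Icc 0 T, HasDerivWithinAt (fun s => φ x s / φ 0 s) _ (Set.Icc 0 T) s :=
      fun s hs => (hode x hx s hs).div (hode 0 le_rfl s hs) (hpos 0 le_rfl s hs).ne'
    have hmono : MonotoneOn (fun s => φ x s / φ 0 s) (Set.Icc 0 T) := by
      refine monotoneOn_of_hasDerivWithinAt_nonneg (convex_Icc 0 T)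
        (fun s hs => (hder s hs).continuousWithinAt)
        (fun s hs => (hder s (interior_subset hs)).mono interior_subset) fun s hs => ?_
      have hs' := interior_subset hs
      have hf : ContinuousOn (fun y => φ y s) (Set.Ici 0) :=
        hC1.continuousOn.comp (f := fun y : ℝ => (y, s)) (by fun_prop) fun y hy => ⟨hy, hs'⟩
      have hI := integral_le hg h0 ha hg' hf hm0 (fun y hy => hm y hy s hs') hx
      refine div_nonneg ?_ (sq_nonneg _)
      have := mul_nonneg (mul_pos (hpos x hx s hs') (hpos 0 le_rfl s hs')).le (sub_nonneg.2 hI)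
      linarith
    have h := hmono ⟨le_rfl, hT.le⟩ ht ht.1
    simp only [hinit x hx, hinit 0 le_rfl, div_self hε₀.ne'] at h
    exact (one_le_div (hpos 0 le_rfl t ht)).1 h
  intro t ht
  refine ⟨main t ht, ⟨0, self_mem_Ici, rfl⟩, ?_⟩
  rintro _ ⟨x, hx, rfl⟩
  exact main t ht x hx
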